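/- Picone identity with base B: suppose s₀ > 0 satisfies the free boundary condition tanh(φ(s₀)) = B(s₀)·K/(a·sinh(2s₀)), and let r := arcosh(A(s₀)·cosh(φ(s₀))). Then for every integer k and every continuously differentiable h : [−s₀, s₀] → ℝ with h'(s₀) = 0 and h'(−s₀) = 0, one has S_k(B·h) = ∫_{−s₀}^{s₀} ( B(s)³·h'(s)² + ((k² − 1)·B(s)² − 2·K²)·h(s)²/B(s) ) ds. -/

import Mathlib

namespace MoriCatenoid

/-- Profile function `B(s) = √(a·cosh(2s) − 1/2)` of the Mori family. -/
noncomputable def B (a s : ℝ) : ℝ := Real.sqrt (a * Real.cosh (2 * s) - 1 / 2)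

/-- Profile function `A(s) = √(a·cosh(2s) + 1/2)` of the Mori family. -/
noncomputable def A (a s : ℝ) : ℝ := Real.sqrt (a * Real.cosh (2 * s) + 1 / 2)

/-- The constant `K = √(a² − 1/4)`. -/
noncomputable def K (a : ℝ) : ℝ := Real.sqrt (a ^ 2 - 1 / 4)

/-- The angle function `φ(s) = K·∫₀ˢ dt/(A(t)²·B(t))`. -/
noncomputable def φ (a s : ℝ) : ℝ := K a * ∫ t in (0:ℝ)..s, 1 / ((A a t) ^ 2 * B a t)

/-- The mode-one Jacobi field `f_*(s) = d/ds (A(s)·cosh(φ(s)))`. -/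
noncomputable def fstar (a s : ℝ) : ℝ := deriv (fun t => A a t * Real.cosh (φ a t)) s

/-- Squared norm of the second fundamental form, `|II|²(s) = 2·(B''(s)/B(s) − 1)`. -/
noncomputable def IIsq (a s : ℝ) : ℝ := 2 * (deriv (deriv (B a)) s / B a s - 1)

/-- The mode-`k` potential `W_k(s) = |II|²(s) − 2 − k²/B(s)²`. -/
noncomputable def W (a : ℝ) (k : ℤ) (s : ℝ) : ℝ := IIsq a s - 2 - (k : ℝ) ^ 2 / (B a s) ^ 2

/-- Inverse hyperbolic cosine: `arcosh x = log (x + √(x² − 1))`. -/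
noncomputable def arcosh (x : ℝ) : ℝ := Real.log (x + Real.sqrt (x ^ 2 - 1))

/-- The axial boost field `u_*(s) = −a·sinh(2s)/B(s)`. -/
noncomputable def ustar (a s : ℝ) : ℝ := -a * Real.sinh (2 * s) / B a s

/-- The radial quadratic form of mode `k`:
`S_k(u) = ∫_{−s₀}^{s₀} (B·u'² − B·W_k·u²) − coth(r)·B(s₀)·(u(s₀)² + u(−s₀)²)`,
where `u'` is the derivative of `u` within `[−s₀, s₀]`. -/
noncomputable def Sk (a s₀ r : ℝ) (k : ℤ) (u : ℝ → ℝ) : ℝ :=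
  (∫ s in (-s₀)..s₀,
      (B a s * (derivWithin u (Set.Icc (-s₀) s₀) s) ^ 2 - B a s * W a k s * u s ^ 2))
    - Real.cosh r / Real.sinh r * B a s₀ * (u s₀ ^ 2 + u (-s₀) ^ 2)

theorem B_arg_pos (a : ℝ) (ha : 1 / 2 < a) (s : ℝ) : 0 < a * Real.cosh (2 * s) - 1 / 2 := by
  nlinarith [Real.one_le_cosh (2 * s)]

theorem B_pos (a : ℝ) (ha : 1 / 2 < a) (s : ℝ) : 0 < B a s :=
  Real.sqrt_pos.2 (B_arg_pos a ha s)

theorem B_sq (a : ℝ) (ha : 1 / 2 < a) (s : ℝ) :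
    B a s ^ 2 = a * Real.cosh (2 * s) - 1 / 2 :=
  Real.sq_sqrt (B_arg_pos a ha s).le

theorem K_sq (a : ℝ) (ha : 1 / 2 < a) : K a ^ 2 = a ^ 2 - 1 / 4 :=
  Real.sq_sqrt (by nlinarith)

theorem B_hasDerivAt (a : ℝ) (ha : 1 / 2 < a) (s : ℝ) :
    HasDerivAt (B a) (a * Real.sinh (2 * s) / B a s) s := by
  have h1 : HasDerivAt (fun s : ℝ => 2 * s) 2 s := by
    simpa using (hasDerivAt_id s).const_mul (2 : ℝ)
  have h2 := ((h1.cosh.const_mul a).sub_const (1 / 2)).sqrt (B_arg_pos a ha s).ne'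
  have hB := B_pos a ha s
  refine h2.congr_deriv ?_
  change _ / (2 * B a s) = _
  field_simp

theorem sinh2_hasDerivAt (a s : ℝ) :
    HasDerivAt (fun s => a * Real.sinh (2 * s)) (2 * (a * Real.cosh (2 * s))) s := by
  have h1 : HasDerivAt (fun s : ℝ => 2 * s) 2 s := by
    simpa using (hasDerivAt_id s).const_mul (2 : ℝ)
  exact (h1.sinh.const_mul a).congr_deriv (by ring)

theorem D_sq (a : ℝ) (ha : 1 / 2 < a) (s : ℝ) :
    (a * Real.sinh (2 * s)) ^ 2 = (B a s ^ 2 + 1) * B a s ^ 2 - K a ^ 2 := by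
  rw [B_sq a ha, K_sq a ha]
  have := Real.cosh_sq (2 * s)
  linear_combination (-a ^ 2) * this

theorem IIsq_eq (a : ℝ) (ha : 1 / 2 < a) (s : ℝ) :
    IIsq a s = 2 * K a ^ 2 / B a s ^ 4 := by
  have hd : deriv (B a) = fun s => a * Real.sinh (2 * s) / B a s :=
    funext fun s => (B_hasDerivAt a ha s).deriv
  have hB := B_pos a ha s
  have h2 := (sinh2_hasDerivAt a s).fun_div (B_hasDerivAt a ha s) hB.ne'
  unfold IIsq
  rw [hd, h2.deriv]
  have e1 := B_sq a ha s
  have e2 := D_sq a ha s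
  have e3 : a * Real.cosh (2 * s) = B a s ^ 2 + 1 / 2 := by linarith
  rw [e3]
  generalize a * Real.sinh (2 * s) = D at *
  field_simp
  linear_combination -e2

theorem B_neg (a s : ℝ) : B a (-s) = B a s := by
  unfold B
  rw [mul_neg, Real.cosh_neg]

theorem coth_eq (a : ℝ) (ha : 1 / 2 < a) (s₀ : ℝ) (hs₀ : 0 < s₀)
    (hFBC : Real.tanh (φ a s₀) = B a s₀ * K a / (a * Real.sinh (2 * s₀)))
    (r : ℝ) (hr : r = arcosh (A a s₀ * Real.cosh (φ a s₀))) :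
    Real.cosh r / Real.sinh r = a * Real.sinh (2 * s₀) / B a s₀ ^ 2 := by
  have hB := B_pos a ha s₀
  have hBs := B_sq a ha s₀
  have hD : 0 < a * Real.sinh (2 * s₀) :=
    mul_pos (by linarith) (Real.sinh_pos_iff.2 (by linarith))
  have hD2 := D_sq a ha s₀
  have hA2 : A a s₀ ^ 2 = B a s₀ ^ 2 + 1 := by
    rw [hBs]
    unfold A
    rw [Real.sq_sqrt (by linarith [B_arg_pos a ha s₀])]
    ring
  have hA0 : 0 ≤ A a s₀ := Real.sqrt_nonneg _
  have hA : 1 < A a s₀ := by nlinarith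
  have hc := Real.one_le_cosh (φ a s₀)
  have hx : 1 < A a s₀ * Real.cosh (φ a s₀) := by nlinarith
  have hcs := Real.cosh_sq (φ a s₀)
  have hchr : Real.cosh r = A a s₀ * Real.cosh (φ a s₀) := by
    rw [hr]; exact Real.cosh_arcosh hx.le
  have hshr : 0 < Real.sinh r := by
    rw [hr, Real.sinh_pos_iff]
    exact Real.arcosh_pos hx
  have hrs := Real.cosh_sq r
  rw [Real.tanh_eq_sinh_div_cosh, div_eq_div_iff (by positivity) hD.ne'] at hFBC
  generalize Real.sinh (φ a s₀) = S at *
  generalize Real.cosh (φ a s₀) = C at *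
  generalize a * Real.sinh (2 * s₀) = D at *
  have h1 : D ^ 2 = C ^ 2 * (D ^ 2 - B a s₀ ^ 2 * K a ^ 2) := by
    linear_combination (-D ^ 2) * hcs - (S * D + B a s₀ * K a * C) * hFBC
  have h2 : Real.cosh r ^ 2 * (D ^ 2 - B a s₀ ^ 4) = D ^ 2 := by
    rw [hchr, mul_pow, hA2]
    linear_combination -h1 + (C^2 * (B a s₀ ^ 2 + 1) - C^2) * hD2
  have h3 : (Real.cosh r * B a s₀ ^ 2) ^ 2 = (D * Real.sinh r) ^ 2 := by
    linear_combination -h2 + D ^ 2 * hrs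
  rw [div_eq_div_iff hshr.ne' (by positivity)]
  have := Real.cosh_pos r
  exact (sq_eq_sq₀ (by positivity) (by positivity)).1 h3

/-- Picone identity with base `B`: under the free boundary condition, for every
integer `k` and every `C¹` function `h` on `[−s₀, s₀]` with `h'(±s₀) = 0`,
`S_k(B·h) = ∫ (B³·h'² + ((k² − 1)·B² − 2·K²)·h²/B)`. -/
theorem picone_identity_baseB (a : ℝ) (ha : 1 / 2 < a) (s₀ : ℝ) (hs₀ : 0 < s₀)
    (hFBC : Real.tanh (φ a s₀) = B a s₀ * K a / (a * Real.sinh (2 * s₀)))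
    (r : ℝ) (hr : r = arcosh (A a s₀ * Real.cosh (φ a s₀)))
    (k : ℤ) (h : ℝ → ℝ) (hh : ContDiffOn ℝ 1 h (Set.Icc (-s₀) s₀))
    (hd1 : derivWithin h (Set.Icc (-s₀) s₀) s₀ = 0)
    (hd2 : derivWithin h (Set.Icc (-s₀) s₀) (-s₀) = 0) :
    Sk a s₀ r k (fun s => B a s * h s)
      = ∫ s in (-s₀)..s₀,
          (B a s ^ 3 * (derivWithin h (Set.Icc (-s₀) s₀) s) ^ 2
            + (((k : ℝ) ^ 2 - 1) * B a s ^ 2 - 2 * K a ^ 2) * h s ^ 2 / B a s) := by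
  have hle : -s₀ ≤ s₀ := by linarith
  have hlt : -s₀ < s₀ := by linarith
  have hu : UniqueDiffOn ℝ (Set.Icc (-s₀) s₀) := uniqueDiffOn_Icc hlt
  have hBc : Continuous (B a) :=
    continuous_iff_continuousAt.2 fun s => (B_hasDerivAt a ha s).continuousAt
  have hhc := hh.continuousOn
  have hh'c : ContinuousOn (derivWithin h (Set.Icc (-s₀) s₀)) (Set.Icc (-s₀) s₀) :=
    hh.continuousOn_derivWithin hu le_rfl
  have hhd : ∀ s ∈ Set.Icc (-s₀) s₀,
      HasDerivWithinAt h (derivWithin h (Set.Icc (-s₀) s₀) s) (Set.Icc (-s₀) s₀) s :=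
    fun s hs => ((hh.differentiableOn one_ne_zero) s hs).hasDerivWithinAt
  have hcoth := coth_eq a ha s₀ hs₀ hFBC r hr
  have hB0 := B_pos a ha s₀
  unfold Sk
  rw [hcoth]
  set h' := derivWithin h (Set.Icc (-s₀) s₀) with hh'
  have hcSinh : Continuous fun s => a * Real.sinh (2 * s) := by fun_prop
  have hcCosh : Continuous fun s => a * Real.cosh (2 * s) := by fun_prop
  have hne : ∀ s ∈ Set.Icc (-s₀) s₀, B a s ≠ 0 := fun s _ => (B_pos a ha s).ne'
  let G : ℝ → ℝ := fun s => (2 * (a * Real.cosh (2 * s)) * B a s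
      + a * Real.sinh (2 * s) * (a * Real.sinh (2 * s) / B a s)) * h s ^ 2
      + a * Real.sinh (2 * s) * B a s * (2 * h s * h' s)
  have hGc : ContinuousOn G (Set.Icc (-s₀) s₀) := by
    have := hBc.continuousOn (s := Set.Icc (-s₀) s₀)
    have := hcSinh.continuousOn (s := Set.Icc (-s₀) s₀)
    have := hcCosh.continuousOn (s := Set.Icc (-s₀) s₀)
    simp only [G]
    fun_prop (disch := assumption)
  have hRc : ContinuousOn (fun s => B a s ^ 3 * h' s ^ 2
            + (((k : ℝ) ^ 2 - 1) * B a s ^ 2 - 2 * K a ^ 2) * h s ^ 2 / B a s)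
            (Set.Icc (-s₀) s₀) := by
    have := hBc.continuousOn (s := Set.Icc (-s₀) s₀)
    fun_prop (disch := assumption)
  have hGi : IntervalIntegrable G MeasureTheory.volume (-s₀) s₀ :=
    ContinuousOn.intervalIntegrable_of_Icc hle hGc
  have hRi := ContinuousOn.intervalIntegrable_of_Icc (μ := MeasureTheory.volume) hle hRc
  have hFTC : ∫ s in (-s₀)..s₀, G s
      = a * Real.sinh (2 * s₀) * B a s₀ * h s₀ ^ 2
        - a * Real.sinh (2 * -s₀) * B a (-s₀) * h (-s₀) ^ 2 := by
    refine intervalIntegral.integral_eq_sub_of_hasDerivAt_of_le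
      (f := fun s => a * Real.sinh (2 * s) * B a s * h s ^ 2) hle ?_ ?_ hGi
    · exact ((hcSinh.mul hBc).continuousOn).mul (hhc.pow 2)
    · intro s hs
      have e := (hhd s (Set.Ioo_subset_Icc_self hs)).hasDerivAt (Icc_mem_nhds hs.1 hs.2)
      refine (((sinh2_hasDerivAt a s).fun_mul (B_hasDerivAt a ha s)).fun_mul
        (e.fun_pow 2)).congr_deriv ?_
      simp only [G]
      push_cast
      ring
  have hcongr : ∫ s in (-s₀)..s₀,
      (B a s * (derivWithin (fun s => B a s * h s) (Set.Icc (-s₀) s₀) s) ^ 2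
        - B a s * W a k s * (B a s * h s) ^ 2)
      = ∫ s in (-s₀)..s₀, ((B a s ^ 3 * h' s ^ 2
            + (((k : ℝ) ^ 2 - 1) * B a s ^ 2 - 2 * K a ^ 2) * h s ^ 2 / B a s) + G s) := by
    refine intervalIntegral.integral_congr fun s hs => ?_
    rw [Set.uIcc_of_le hle] at hs
    have e := ((B_hasDerivAt a ha s).hasDerivWithinAt.fun_mul (hhd s hs)).derivWithin (hu s hs)
    have hB := B_pos a ha s
    have e2 := D_sq a ha s
    have e3 : a * Real.cosh (2 * s) = B a s ^ 2 + 1 / 2 := by linarith [B_sq a ha s]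
    simp only [G, W]
    rw [e, IIsq_eq a ha, e3]
    generalize a * Real.sinh (2 * s) = D at *
    field_simp
    ring
  rw [hcongr, intervalIntegral.integral_add hRi hGi, hFTC]
  simp only [B_neg, mul_neg, Real.sinh_neg]
  generalize (∫ s in (-s₀)..s₀, (B a s ^ 3 * h' s ^ 2
            + (((k : ℝ) ^ 2 - 1) * B a s ^ 2 - 2 * K a ^ 2) * h s ^ 2 / B a s)) = J
  field_simp
  ring

end MoriCatenoid
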